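/- Let K be a field and let P, Q be cochain complexes of K-vector spaces. Then for every integer n, there is an isomorphism H^n(P ⊗ Q) ≅ ⊕_{i+j=n} H^i(P) ⊗ H^j(Q). -/

import Mathlib

open scoped TensorProduct DirectSum

/-- The image of the differential landing in degree `n` of a cochain complex. -/
abbrev imAt {K : Type*} [Field K] {C : ℤ → Type*}
    [∀ n, AddCommGroup (C n)] [∀ n, Module K (C n)]
    (d : ∀ n, C n →ₗ[K] C (n + 1)) (n : ℤ) : Submodule K (C n) :=
  Submodule.span K {x | ∃ (m : ℤ) (h : m + 1 = n) (y : C m), x = cast (congrArg C h) (d m y)}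

/-- The cohomology `H^n` of a cochain complex of `K`-vector spaces. -/
abbrev cohAt {K : Type*} [Field K] {C : ℤ → Type*}
    [∀ n, AddCommGroup (C n)] [∀ n, Module K (C n)]
    (d : ∀ n, C n →ₗ[K] C (n + 1)) (n : ℤ) : Type _ :=
  LinearMap.ker (d n) ⧸ (imAt d n).comap (LinearMap.ker (d n)).subtype

/-!
Over a field, a complex `C` deformation retracts onto its cohomology: there are maps
`i : H → C` and `p : C → H` with `p i = 1`, and a homotopy `h` with `1 - i p = d h + h d`.
Conversely, a deformation retract of a complex onto a graded vector space `H` with zero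
differential identifies the cohomology with `H`. Finally, the tensor product of two deformation
retracts is again one, with homotopy `h ⊗ 1 ± i p ⊗ h`; hence `H(P) ⊗ H(Q)` computes `H(P ⊗ Q)`.
-/

section Retract

variable {R : Type*} [Ring R] {C : ℤ → Type*} [∀ n, AddCommGroup (C n)] [∀ n, Module R (C n)]

/-- A deformation retract, up to chain homotopy, of a cochain complex `(C, d)` onto the graded
module `H` regarded as a complex with zero differential. The homotopy is indexed by pairs of
consecutive degrees, so that it can be used in every degree without a cast. -/
structure HomotopyRetract (d : ∀ n, C n →ₗ[R] C (n + 1)) (H : ℤ → Type*)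
    [∀ n, AddCommGroup (H n)] [∀ n, Module R (H n)] where
  incl : ∀ n, H n →ₗ[R] C n
  proj : ∀ n, C n →ₗ[R] H n
  homotopy : ∀ ⦃i j : ℤ⦄, j + 1 = i → C i →ₗ[R] C j
  d_incl : ∀ n x, d n (incl n x) = 0
  proj_d : ∀ n x, proj (n + 1) (d n x) = 0
  proj_incl : ∀ n x, proj n (incl n x) = x
  sub_incl_proj : ∀ n (x : C (n + 1)),
    x - incl (n + 1) (proj (n + 1) x) = d n (homotopy rfl x) + homotopy rfl (d (n + 1) x)

end Retract

section Cohomology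

variable {K : Type*} [Field K] {C : ℤ → Type*} [∀ n, AddCommGroup (C n)] [∀ n, Module K (C n)]
  {d : ∀ n, C n →ₗ[K] C (n + 1)}

theorem imAt_succ (d : ∀ n, C n →ₗ[K] C (n + 1)) (n : ℤ) :
    imAt d (n + 1) = LinearMap.range (d n) := by
  refine le_antisymm (Submodule.span_le.2 ?_) ?_
  · rintro _ ⟨m, hm, y, rfl⟩
    obtain rfl : m = n := by omega
    exact ⟨y, rfl⟩
  · rintro _ ⟨y, rfl⟩
    exact Submodule.subset_span ⟨n, rfl, y, rfl⟩

theorem cohAt_mk_eq_zero_iff {n : ℤ} (z : LinearMap.ker (d (n + 1))) :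
    (Submodule.Quotient.mk z : cohAt d (n + 1)) = 0 ↔ ∃ y, d n y = z := by
  rw [Submodule.Quotient.mk_eq_zero, Submodule.mem_comap, imAt_succ]
  rfl

theorem exists_generalized_inverse {k V W : Type*} [DivisionRing k] [AddCommGroup V]
    [Module k V] [AddCommGroup W] [Module k W] (f : V →ₗ[k] W) :
    ∃ s : W →ₗ[k] V, ∀ x, f (s (f x)) = f x := by
  obtain ⟨g, hg⟩ := f.rangeRestrict.exists_rightInverse_of_surjective f.range_rangeRestrict
  obtain ⟨s, hs⟩ := g.exists_extend
  refine ⟨s, fun x => ?_⟩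
  have hsg : s (f x) = g (f.rangeRestrict x) := LinearMap.congr_fun hs (f.rangeRestrict x)
  rw [hsg]
  exact congrArg Subtype.val (LinearMap.congr_fun hg (f.rangeRestrict x))

theorem exists_homotopyRetract_cohAt (hd : ∀ n x, d (n + 1) (d n x) = 0) :
    ∃ r : HomotopyRetract d (cohAt d),
      ∀ n (z : LinearMap.ker (d n)), r.proj n z = Submodule.Quotient.mk z := by
  choose s hs using fun n => exists_generalized_inverse (d n)
  choose σ hσ using fun n =>
    ((imAt d n).comap (LinearMap.ker (d n)).subtype).mkQ.exists_rightInverse_of_surjective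
      (Submodule.range_mkQ _)
  -- `1 - s d` is a projection onto the cycles because `d s d = d`.
  let toCycles n : C n →ₗ[K] LinearMap.ker (d n) :=
    (LinearMap.id - s n ∘ₗ d n).codRestrict _ fun x => by simp [hs]
  let incl n : cohAt d n →ₗ[K] C n := (LinearMap.ker (d n)).subtype ∘ₗ σ n
  let proj n : C n →ₗ[K] cohAt d n := Submodule.mkQ _ ∘ₗ toCycles n
  have coe_toCycles n x : (toCycles n x : C n) = x - s n (d n x) := rfl
  have mk_σ n (c : cohAt d n) : Submodule.Quotient.mk (σ n c) = c := LinearMap.congr_fun (hσ n) c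
  have proj_cycle n (z : LinearMap.ker (d n)) : proj n z = Submodule.Quotient.mk z :=
    congrArg Submodule.Quotient.mk (Subtype.ext (by simp [coe_toCycles]))
  have proj_d n x : proj (n + 1) (d n x) = 0 :=
    (proj_cycle (n + 1) ⟨d n x, hd n x⟩).trans ((cohAt_mk_eq_zero_iff _).2 ⟨x, rfl⟩)
  have boundary n x :
      ∃ y, d n y = x - s (n + 1) (d (n + 1) x) - incl (n + 1) (proj (n + 1) x) :=
    (cohAt_mk_eq_zero_iff (toCycles (n + 1) x - σ (n + 1) (proj (n + 1) x))).1 <| by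
      rw [Submodule.Quotient.mk_sub, mk_σ]
      exact sub_self _
  refine ⟨{
    incl, proj, proj_d
    homotopy := by
      rintro _ n rfl
      exact s n ∘ₗ (LinearMap.id - s (n + 1) ∘ₗ d (n + 1) - incl (n + 1) ∘ₗ proj (n + 1))
    d_incl := fun n c => (σ n c).2
    proj_incl := fun n c => (proj_cycle n (σ n c)).trans (mk_σ n c)
    sub_incl_proj := fun n x => ?_ }, proj_cycle⟩
  obtain ⟨y, hy⟩ := boundary n x
  simp only [LinearMap.comp_apply, LinearMap.sub_apply, LinearMap.id_apply, ← hy, hs, hd, proj_d,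
    map_zero, sub_zero]
  rw [hy]
  abel

namespace HomotopyRetract

variable {H : ℤ → Type*} [∀ n, AddCommGroup (H n)] [∀ n, Module K (H n)]

theorem proj_eq_zero_iff (r : HomotopyRetract d H) {n : ℤ} {z : C (n + 1)}
    (hz : d (n + 1) z = 0) : r.proj (n + 1) z = 0 ↔ ∃ y, d n y = z := by
  refine ⟨fun hpz => ⟨r.homotopy rfl z, ?_⟩, ?_⟩
  · simpa [hz, hpz] using (r.sub_incl_proj n z).symm
  · rintro ⟨y, rfl⟩
    exact r.proj_d n y

theorem exists_cohAt_equiv (r : HomotopyRetract d H) (n : ℤ) :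
    ∃ e : cohAt d n ≃ₗ[K] H n,
      ∀ z : LinearMap.ker (d n), e (Submodule.Quotient.mk z) = r.proj n z := by
  obtain ⟨m, rfl⟩ : ∃ m, n = m + 1 := ⟨n - 1, by omega⟩
  let f : LinearMap.ker (d (m + 1)) →ₗ[K] H (m + 1) := r.proj (m + 1) ∘ₗ Submodule.subtype _
  have hf : Function.Surjective f := fun x =>
    ⟨⟨r.incl _ x, r.d_incl _ x⟩, r.proj_incl _ x⟩
  have hker : (imAt d (m + 1)).comap (LinearMap.ker (d (m + 1))).subtype = LinearMap.ker f := by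
    ext z
    rw [← Submodule.Quotient.mk_eq_zero, cohAt_mk_eq_zero_iff]
    exact (r.proj_eq_zero_iff z.2).symm
  exact ⟨(Submodule.quotEquivOfEq _ _ hker).trans (f.quotKerEquivOfSurjective hf), fun _ => rfl⟩

end HomotopyRetract

end Cohomology

section TotalTensor

variable (R : Type*) [CommSemiring R] (P Q : ℤ → Type*)
  [∀ n, AddCommMonoid (P n)] [∀ n, Module R (P n)]
  [∀ n, AddCommMonoid (Q n)] [∀ n, Module R (Q n)]

/-- The degree `n` part `⨁_{i+j=n} Pⁱ ⊗ Qʲ` of the tensor product of two graded modules. -/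
abbrev TotalTensor (n : ℤ) : Type _ :=
  ⨁ ij : {ij : ℤ × ℤ // ij.1 + ij.2 = n}, P ij.1.1 ⊗[R] Q ij.1.2

namespace TotalTensor

/-- The inclusion of the summand of bidegree `(i, j)` into the total tensor product. -/
def ι {i j n : ℤ} (hij : i + j = n) : P i ⊗[R] Q j →ₗ[R] TotalTensor R P Q n :=
  DirectSum.lof R {ij : ℤ × ℤ // ij.1 + ij.2 = n} (fun ij => P ij.1.1 ⊗[R] Q ij.1.2) ⟨(i, j), hij⟩

variable {R P Q}

theorem hom_ext {M : Type*} [AddCommMonoid M] [Module R M] {n : ℤ}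
    {f g : TotalTensor R P Q n →ₗ[R] M}
    (h : ∀ i j (hij : i + j = n) x y, f (ι R P Q hij (x ⊗ₜ y)) = g (ι R P Q hij (x ⊗ₜ y))) :
    f = g :=
  DirectSum.linearMap_ext R fun ij => TensorProduct.ext' (h ij.1.1 ij.1.2 ij.2)

/-- The linear map out of a total tensor product with prescribed components. -/
def desc {M : Type*} [AddCommMonoid M] [Module R M] {n : ℤ}
    (f : ∀ i j, i + j = n → P i ⊗[R] Q j →ₗ[R] M) : TotalTensor R P Q n →ₗ[R] M :=
  DirectSum.toModule R _ M fun ij => f ij.1.1 ij.1.2 ij.2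

theorem desc_ι {M : Type*} [AddCommMonoid M] [Module R M] {n : ℤ}
    (f : ∀ i j, i + j = n → P i ⊗[R] Q j →ₗ[R] M) {i j : ℤ} (hij : i + j = n) (t : P i ⊗[R] Q j) :
    desc f (ι R P Q hij t) = f i j hij t :=
  DirectSum.toModule_lof R _ _

variable {P' Q' : ℤ → Type*} [∀ n, AddCommMonoid (P' n)] [∀ n, Module R (P' n)]
  [∀ n, AddCommMonoid (Q' n)] [∀ n, Module R (Q' n)]

/-- The map of total tensor products induced by two maps of graded modules. -/
def map (f : ∀ n, P n →ₗ[R] P' n) (g : ∀ n, Q n →ₗ[R] Q' n) (n : ℤ) :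
    TotalTensor R P Q n →ₗ[R] TotalTensor R P' Q' n :=
  desc fun i j hij => ι R P' Q' hij ∘ₗ TensorProduct.map (f i) (g j)

theorem map_ι_tmul (f : ∀ n, P n →ₗ[R] P' n) (g : ∀ n, Q n →ₗ[R] Q' n) {i j n : ℤ}
    (hij : i + j = n) (x : P i) (y : Q j) :
    map f g n (ι R P Q hij (x ⊗ₜ y)) = ι R P' Q' hij (f i x ⊗ₜ g j y) :=
  desc_ι _ hij _

end TotalTensor

end TotalTensor

section TensorComplex

open TotalTensor

variable {K : Type*} [Field K] {P Q HP HQ : ℤ → Type*}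
  [∀ n, AddCommGroup (P n)] [∀ n, Module K (P n)] [∀ n, AddCommGroup (Q n)] [∀ n, Module K (Q n)]
  [∀ n, AddCommGroup (HP n)] [∀ n, Module K (HP n)]
  [∀ n, AddCommGroup (HQ n)] [∀ n, Module K (HQ n)]
  {dP : ∀ n, P n →ₗ[K] P (n + 1)} {dQ : ∀ n, Q n →ₗ[K] Q (n + 1)}
  {dT : ∀ n, TotalTensor K P Q n →ₗ[K] TotalTensor K P Q (n + 1)}

theorem neg_one_zpow_mul_self {k : Type*} [DivisionRing k] (n : ℤ) :
    (-1 : k) ^ n * (-1) ^ n = 1 := by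
  rw [← (Commute.refl (-1 : k)).mul_zpow, neg_one_mul, neg_neg, one_zpow]

/-- `dT` is the differential `d(x ⊗ y) = dx ⊗ y + (-1)^|x| x ⊗ dy` of the tensor product of the
complexes `(P, dP)` and `(Q, dQ)`. -/
def IsTensorDifferential (dP : ∀ n, P n →ₗ[K] P (n + 1)) (dQ : ∀ n, Q n →ₗ[K] Q (n + 1))
    (dT : ∀ n, TotalTensor K P Q n →ₗ[K] TotalTensor K P Q (n + 1)) : Prop :=
  ∀ ⦃n i j : ℤ⦄ (hij : i + j = n) (x : P i) (y : Q j),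
    dT n (ι K P Q hij (x ⊗ₜ y)) =
      ι K P Q (show i + 1 + j = n + 1 by omega) (dP i x ⊗ₜ y) +
        (-1 : K) ^ i • ι K P Q (show i + (j + 1) = n + 1 by omega) (x ⊗ₜ dQ j y)

theorem IsTensorDifferential.ι_tmul_mem_ker (hdT : IsTensorDifferential dP dQ dT) {n i j : ℤ}
    (hij : i + j = n) (x : LinearMap.ker (dP i)) (y : LinearMap.ker (dQ j)) :
    ι K P Q hij (x.1 ⊗ₜ y.1) ∈ LinearMap.ker (dT n) := by
  simp [hdT hij]

namespace HomotopyRetract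

/-- The homotopy `h ⊗ 1 + (-1)^|x| i p ⊗ h` on the tensor product of two complexes. -/
def tensorHomotopy (r : HomotopyRetract dP HP) (s : HomotopyRetract dQ HQ) {n m : ℤ}
    (hmn : m + 1 = n) : TotalTensor K P Q n →ₗ[K] TotalTensor K P Q m :=
  desc fun i j hij =>
    ι K P Q (show i - 1 + j = m by omega) ∘ₗ
        TensorProduct.map (r.homotopy (sub_add_cancel i 1)) LinearMap.id +
      (-1 : K) ^ i • ι K P Q (show i + (j - 1) = m by omega) ∘ₗ
        TensorProduct.map (r.incl i ∘ₗ r.proj i) (s.homotopy (sub_add_cancel j 1))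

theorem tensorHomotopy_ι_tmul (r : HomotopyRetract dP HP) (s : HomotopyRetract dQ HQ) {n m : ℤ}
    (hmn : m + 1 = n) {a b i j : ℤ} (ha : a + 1 = i) (hb : b + 1 = j) (hij : i + j = n)
    (x : P i) (y : Q j) :
    r.tensorHomotopy s hmn (ι K P Q hij (x ⊗ₜ y)) =
      ι K P Q (show a + j = m by omega) (r.homotopy ha x ⊗ₜ y) +
        (-1 : K) ^ i • ι K P Q (show i + b = m by omega)
          (r.incl i (r.proj i x) ⊗ₜ s.homotopy hb y) := by
  obtain rfl : a = i - 1 := by omega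
  obtain rfl : b = j - 1 := by omega
  exact desc_ι _ hij _

theorem tensor_d_homotopy (r : HomotopyRetract dP HP) (s : HomotopyRetract dQ HQ)
    (hdT : IsTensorDifferential dP dQ dT) {a b n : ℤ} (hab : a + 1 + (b + 1) = n + 1)
    (x : P (a + 1)) (y : Q (b + 1)) :
    dT n (r.tensorHomotopy s rfl (ι K P Q hab (x ⊗ₜ y))) =
      ι K P Q hab (dP a (r.homotopy rfl x) ⊗ₜ y) -
        (-1 : K) ^ (a + 1) • ι K P Q (show a + (b + 1 + 1) = n + 1 by omega)
          (r.homotopy rfl x ⊗ₜ dQ (b + 1) y) +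
        ι K P Q hab (r.incl _ (r.proj _ x) ⊗ₜ dQ b (s.homotopy rfl y)) := by
  have sign : (-1 : K) ^ (a + 1) = -(-1) ^ a := by
    rw [zpow_add_one₀ (neg_ne_zero.2 one_ne_zero), mul_neg_one]
  rw [r.tensorHomotopy_ι_tmul s rfl rfl rfl, map_add, map_smul, hdT, hdT, r.d_incl,
    TensorProduct.zero_tmul, map_zero, zero_add, smul_smul, neg_one_zpow_mul_self, one_smul]
  rw [sign]
  module

theorem tensor_homotopy_d (r : HomotopyRetract dP HP) (s : HomotopyRetract dQ HQ)
    (hdT : IsTensorDifferential dP dQ dT) {a b n : ℤ} (hab : a + 1 + (b + 1) = n + 1)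
    (x : P (a + 1)) (y : Q (b + 1)) :
    r.tensorHomotopy s rfl (dT (n + 1) (ι K P Q hab (x ⊗ₜ y))) =
      ι K P Q hab (r.homotopy rfl (dP (a + 1) x) ⊗ₜ y) +
        (-1 : K) ^ (a + 1) • ι K P Q (show a + (b + 1 + 1) = n + 1 by omega)
          (r.homotopy rfl x ⊗ₜ dQ (b + 1) y) +
        ι K P Q hab (r.incl _ (r.proj _ x) ⊗ₜ s.homotopy rfl (dQ (b + 1) y)) := by
  rw [hdT, map_add, map_smul, r.tensorHomotopy_ι_tmul s rfl rfl rfl,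
    r.tensorHomotopy_ι_tmul s rfl rfl rfl, r.proj_d, map_zero, TensorProduct.zero_tmul, map_zero,
    smul_zero, add_zero, smul_add, smul_smul, neg_one_zpow_mul_self, one_smul]
  abel

theorem tensor_sub_incl_proj (r : HomotopyRetract dP HP) (s : HomotopyRetract dQ HQ)
    (hdT : IsTensorDifferential dP dQ dT) (n : ℤ) (t : TotalTensor K P Q (n + 1)) :
    t - map r.incl s.incl (n + 1) (map r.proj s.proj (n + 1) t) =
      dT n (r.tensorHomotopy s rfl t) + r.tensorHomotopy s rfl (dT (n + 1) t) := by
  suffices h : LinearMap.id - map r.incl s.incl (n + 1) ∘ₗ map r.proj s.proj (n + 1) =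
      dT n ∘ₗ r.tensorHomotopy s rfl + r.tensorHomotopy s rfl ∘ₗ dT (n + 1) from
    LinearMap.congr_fun h t
  refine hom_ext fun i j hij x y => ?_
  obtain ⟨a, rfl⟩ : ∃ a, i = a + 1 := ⟨i - 1, by omega⟩
  obtain ⟨b, rfl⟩ : ∃ b, j = b + 1 := ⟨j - 1, by omega⟩
  set x' := r.incl _ (r.proj _ x) with hx'
  set y' := s.incl _ (s.proj _ y) with hy'
  have split : x ⊗ₜ[K] y - x' ⊗ₜ y' = (x - x') ⊗ₜ y + x' ⊗ₜ (y - y') := by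
    rw [TensorProduct.sub_tmul, TensorProduct.tmul_sub]
    abel
  have homotopies : ι K P Q hij (x ⊗ₜ y) - ι K P Q hij (x' ⊗ₜ y') =
      dT n (r.tensorHomotopy s rfl (ι K P Q hij (x ⊗ₜ y))) +
        r.tensorHomotopy s rfl (dT (n + 1) (ι K P Q hij (x ⊗ₜ y))) := by
    rw [← map_sub, split, hx', hy', r.sub_incl_proj, s.sub_incl_proj,
      r.tensor_d_homotopy s hdT, r.tensor_homotopy_d s hdT, TensorProduct.add_tmul,
      TensorProduct.tmul_add, map_add, map_add, map_add]
    abel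
  simpa only [LinearMap.sub_apply, LinearMap.add_apply, LinearMap.comp_apply, LinearMap.id_apply,
    map_ι_tmul] using homotopies

/-- The tensor product of two deformation retracts. -/
def tensor (r : HomotopyRetract dP HP) (s : HomotopyRetract dQ HQ)
    (hdT : IsTensorDifferential dP dQ dT) : HomotopyRetract dT (TotalTensor K HP HQ) where
  incl := map r.incl s.incl
  proj := map r.proj s.proj
  homotopy := fun _ _ => r.tensorHomotopy s
  d_incl n := LinearMap.congr_fun (f := dT n ∘ₗ map r.incl s.incl n) (g := 0) <|
    hom_ext fun i j hij x y => by simp [map_ι_tmul, hdT hij, r.d_incl, s.d_incl]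
  proj_d n := LinearMap.congr_fun (f := map r.proj s.proj (n + 1) ∘ₗ dT n) (g := 0) <|
    hom_ext fun i j hij x y => by simp [map_ι_tmul, hdT hij, r.proj_d, s.proj_d]
  proj_incl n :=
    LinearMap.congr_fun (f := map r.proj s.proj n ∘ₗ map r.incl s.incl n) (g := LinearMap.id) <|
      hom_ext fun i j hij x y => by simp [map_ι_tmul, r.proj_incl, s.proj_incl]
  sub_incl_proj := r.tensor_sub_incl_proj s hdT

end HomotopyRetract

theorem stmt_2_general (hdP : ∀ n x, dP (n + 1) (dP n x) = 0)
    (hdQ : ∀ n y, dQ (n + 1) (dQ n y) = 0) (hdT : IsTensorDifferential dP dQ dT) (n : ℤ) :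
    ∃ e : cohAt dT n ≃ₗ[K] TotalTensor K (cohAt dP) (cohAt dQ) n,
      ∀ i j (hij : i + j = n) (x : LinearMap.ker (dP i)) (y : LinearMap.ker (dQ j)),
        e (Submodule.Quotient.mk ⟨ι K P Q hij (x.1 ⊗ₜ y.1), hdT.ι_tmul_mem_ker hij x y⟩) =
          ι K (cohAt dP) (cohAt dQ) hij
            (Submodule.Quotient.mk x ⊗ₜ Submodule.Quotient.mk y) := by
  obtain ⟨r, hr⟩ := exists_homotopyRetract_cohAt hdP
  obtain ⟨s, hs⟩ := exists_homotopyRetract_cohAt hdQ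
  obtain ⟨e, he⟩ := (r.tensor s hdT).exists_cohAt_equiv n
  refine ⟨e, fun i j hij x y => ?_⟩
  rw [he, ← hr, ← hs]
  exact map_ι_tmul _ _ hij _ _

end TensorComplex

/-- Künneth over a field: for cochain complexes `P, Q` of `K`-vector spaces
and the tensor product complex `T` with `T^n = ⊕_{i+j=n} P^i ⊗ Q^j` and differential
`d(x ⊗ y) = dx ⊗ y + (-1)^{|x|} x ⊗ dy`, one has
`H^n(P ⊗ Q) ≅ ⊕_{i+j=n} H^i(P) ⊗ H^j(Q)` for every `n`. -/
theorem stmt_2 (K : Type) [Field K] (P Q : ℤ → Type)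
    [∀ n, AddCommGroup (P n)] [∀ n, Module K (P n)]
    [∀ n, AddCommGroup (Q n)] [∀ n, Module K (Q n)]
    (dP : ∀ n, P n →ₗ[K] P (n + 1)) (dQ : ∀ n, Q n →ₗ[K] Q (n + 1))
    (hdP : ∀ n (x : P n), dP (n + 1) (dP n x) = 0)
    (hdQ : ∀ n (y : Q n), dQ (n + 1) (dQ n y) = 0)
    (dT : ∀ n : ℤ,
      (⨁ ij : {ij : ℤ × ℤ // ij.1 + ij.2 = n}, TensorProduct K (P ij.1.1) (Q ij.1.2)) →ₗ[K]
      (⨁ ij : {ij : ℤ × ℤ // ij.1 + ij.2 = n + 1}, TensorProduct K (P ij.1.1) (Q ij.1.2)))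
    (hdT : ∀ (n : ℤ) (ij : {ij : ℤ × ℤ // ij.1 + ij.2 = n}) (x : P ij.1.1) (y : Q ij.1.2),
      dT n (DirectSum.lof K {ij : ℤ × ℤ // ij.1 + ij.2 = n}
          (fun ij => TensorProduct K (P ij.1.1) (Q ij.1.2)) ij (x ⊗ₜ y)) =
        DirectSum.lof K {ij : ℤ × ℤ // ij.1 + ij.2 = n + 1}
          (fun ij => TensorProduct K (P ij.1.1) (Q ij.1.2))
          ⟨(ij.1.1 + 1, ij.1.2), by have h := ij.2; show ij.1.1 + 1 + ij.1.2 = n + 1; omega⟩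
          ((dP ij.1.1 x) ⊗ₜ y)
        + ((-1 : K) ^ ij.1.1) • DirectSum.lof K {ij : ℤ × ℤ // ij.1 + ij.2 = n + 1}
          (fun ij => TensorProduct K (P ij.1.1) (Q ij.1.2))
          ⟨(ij.1.1, ij.1.2 + 1), by have h := ij.2; show ij.1.1 + (ij.1.2 + 1) = n + 1; omega⟩
          (x ⊗ₜ (dQ ij.1.2 y)))
    (hdTsq : ∀ n x, dT (n + 1) (dT n x) = 0) :
    ∀ n : ℤ, Nonempty ((cohAt dT n) ≃ₗ[K]
      ⨁ ij : {ij : ℤ × ℤ // ij.1 + ij.2 = n},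
        TensorProduct K (cohAt dP ij.1.1) (cohAt dQ ij.1.2)) := by
  exact fun n => ⟨(stmt_2_general hdP hdQ (fun n i j hij => hdT n ⟨(i, j), hij⟩) n).choose⟩
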